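/- Let ψ : ℝ² → ℝ be a Minkowski norm and φ : ℝ² → ℝ a weak Minkowski norm; set Ω := {x ∈ ℝ² : φ(x) < 1}. Let P : Ω × ℝ² → ℝ be the unique function with P(x,y) = φ(y + P(x,y)•x) for all (x,y) ∈ Ω × ℝ², which is C^∞ on Ω × (ℝ² \ {0}), and define F(x,y) := ψ(y + P(x,y)•x)·(1 + (D_yP)(x,y)(x)) for (x,y) ∈ Ω × (ℝ² \ {0}), where (D_yP)(x,y) is the Fréchet derivative of z ↦ P(x,z) at z = y. Let 𝒪 := {x ∈ Ω : for every y ≠ 0 the second Fréchet derivative of z ↦ F(x,z)² at z = y is positive definite}. Then every connected component of 𝒪 is a convex subset of ℝ². -/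

import Mathlib

/-!
At a fixed base point `x`, the map `z ↦ z - φ(z) x` inverts `y ↦ y + P(x, y) x`, and in the
coordinate `z` the metric is `ψ(z) / (1 - Dφ(z) x)`. In dimension two, strong convexity of a
positively homogeneous function in the direction `ξ` is the positivity of one second derivative,
taken along any `e` transverse to `ξ`. Writing `x = a ξ + b e`, Euler's relation turns that
derivative, up to a positive factor, into a quadratic polynomial in `r = b / (1 - Dφ(ξ) x)`, with
coefficients depending on `ξ` only. The level sets of `r` are lines, so a point of `{φ < 1}` at
which strong convexity fails lies on a whole line of such points. A connected set which misses a
line stays on one side of it, and so does its convex hull: the convex hull of a component of `𝒪`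
is therefore contained in `𝒪`.
-/

open Filter Topology Module

section Connected

variable {E : Type*} [AddCommGroup E] [Module ℝ E] [TopologicalSpace E]

theorem exists_mem_eq_of_mem_convexHull {K : Set E} (hK : IsPreconnected K) (f : E →L[ℝ] ℝ)
    {m : E} (hm : m ∈ convexHull ℝ K) : ∃ x ∈ K, f x = f m := by
  have hconv : Convex ℝ (f '' K) :=
    Real.convex_iff_isPreconnected.2 (hK.image f f.continuous.continuousOn)
  have himage : f '' convexHull ℝ K = f '' K :=
    ((f : E →ₗ[ℝ] ℝ).image_convexHull K).trans hconv.convexHull_eq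
  exact (Set.mem_image f K _).1 (himage ▸ Set.mem_image_of_mem f hm)

theorem convex_connectedComponentIn_of_hyperplanes [ContinuousAdd E] [ContinuousSMul ℝ E]
    {O Ω : Set E} (hΩ : Convex ℝ Ω) (hOΩ : O ⊆ Ω)
    (hsep : ∀ m ∈ Ω \ O, ∃ f : E →L[ℝ] ℝ, ∀ x ∈ O, f x ≠ f m) (x : E) :
    Convex ℝ (connectedComponentIn O x) := by
  by_cases hx : x ∈ O
  swap
  · simpa only [connectedComponentIn_eq_empty hx] using convex_empty
  set K := connectedComponentIn O x
  have hKO : K ⊆ O := connectedComponentIn_subset O x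
  have hull_subset : convexHull ℝ K ⊆ O := by
    intro m hm
    by_contra hmO
    obtain ⟨f, hf⟩ := hsep m ⟨convexHull_min (hKO.trans hOΩ) hΩ hm, hmO⟩
    obtain ⟨z, hzK, hz⟩ :=
      exists_mem_eq_of_mem_convexHull isPreconnected_connectedComponentIn f hm
    exact hf z (hKO hzK) hz
  have hull_eq : convexHull ℝ K = K :=
    ((convex_convexHull ℝ K).isPreconnected.subset_connectedComponentIn
      (subset_convexHull ℝ K (mem_connectedComponentIn hx)) hull_subset).antisymm
      (subset_convexHull ℝ K)
  exact convexHull_eq_self.1 hull_eq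

end Connected

section Calculus

variable {E F : Type*} [NormedAddCommGroup E] [NormedSpace ℝ E]
  [NormedAddCommGroup F] [NormedSpace ℝ F]

theorem hasDerivAt_add_smul (ξ e : E) (t : ℝ) : HasDerivAt (fun t : ℝ => ξ + t • e) e t := by
  simpa using ((hasDerivAt_id t).smul_const e).const_add ξ

theorem hasDerivAt_comp_add_smul {f : E → F} {ξ e : E} {t : ℝ}
    (hf : DifferentiableAt ℝ f (ξ + t • e)) :
    HasDerivAt (fun t : ℝ => f (ξ + t • e)) (fderiv ℝ f (ξ + t • e) e) t :=
  hf.hasFDerivAt.comp_hasDerivAt t (hasDerivAt_add_smul ξ e t)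

theorem hasDerivAt_zero_comp_add_smul {f : E → F} {ξ : E} (hf : DifferentiableAt ℝ f ξ) (e : E) :
    HasDerivAt (fun t : ℝ => f (ξ + t • e)) (fderiv ℝ f ξ e) 0 := by
  simpa using hasDerivAt_comp_add_smul (t := 0) (e := e) (by simpa using hf)

theorem iteratedDeriv_two_comp_curve {f : E → ℝ} {c c' : ℝ → E} {c'' : E} {t₀ : ℝ}
    (hf : ContDiffAt ℝ 2 f (c t₀)) (hc : ∀ t, HasDerivAt c (c' t) t)
    (hc' : HasDerivAt c' c'' t₀) :
    iteratedDeriv 2 (f ∘ c) t₀ =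
      fderiv ℝ (fderiv ℝ f) (c t₀) (c' t₀) (c' t₀) + fderiv ℝ f (c t₀) c'' := by
  have hderiv : deriv (f ∘ c) =ᶠ[𝓝 t₀] fun t => fderiv ℝ f (c t) (c' t) := by
    filter_upwards [(hc t₀).continuousAt.eventually (hf.eventually (by simp))] with t ht
    exact ((ht.differentiableAt two_ne_zero).hasFDerivAt.comp_hasDerivAt t (hc t)).deriv
  have hfderiv : DifferentiableAt ℝ (fderiv ℝ f) (c t₀) :=
    (hf.fderiv_right (m := 1) (by norm_num)).differentiableAt one_ne_zero
  rw [iteratedDeriv_succ, iteratedDeriv_one, hderiv.deriv_eq]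
  exact ((hfderiv.hasFDerivAt.comp_hasDerivAt t₀ (hc t₀)).clm_apply hc').deriv

theorem iteratedFDeriv_two_sq_apply {f : E → ℝ} {y : E} (hf : ContDiffAt ℝ 2 f y) (θ : E) :
    iteratedFDeriv ℝ 2 (fun z => f z ^ 2) y ![θ, θ] =
      2 * (fderiv ℝ f y θ ^ 2 + f y * fderiv ℝ (fderiv ℝ f) y θ θ) := by
  have hfderiv_sq : fderiv ℝ (fun z => f z ^ 2) =ᶠ[𝓝 y] fun z => (2 * f z) • fderiv ℝ f z := by
    filter_upwards [hf.eventually (by simp)] with z hz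
    simpa using fderiv_fun_pow 2 (hz.differentiableAt two_ne_zero)
  have hf' : DifferentiableAt ℝ f y := hf.differentiableAt two_ne_zero
  have hfderiv : DifferentiableAt ℝ (fderiv ℝ f) y :=
    (hf.fderiv_right (m := 1) (by norm_num)).differentiableAt one_ne_zero
  rw [iteratedFDeriv_two_apply, hfderiv_sq.fderiv_eq, fderiv_fun_smul (hf'.const_mul 2) hfderiv,
    fderiv_const_mul hf']
  simp only [Matrix.cons_val_zero, Matrix.cons_val_one, add_apply,
    smul_apply, ContinuousLinearMap.smulRight_apply, smul_eq_mul]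
  ring

end Calculus

section Homogeneous

variable {E : Type*} [NormedAddCommGroup E] [NormedSpace ℝ E] {f : E → ℝ} {y v : E}

/-- Positive homogeneity of degree one away from the origin. The value at the origin is left
free, since the metrics `F(x, ·)` are only prescribed on nonzero vectors. -/
def PosHomogeneous (f : E → ℝ) : Prop :=
  ∀ α : ℝ, 0 < α → ∀ y, y ≠ 0 → f (α • y) = α * f y

theorem PosHomogeneous.fderiv_apply_self (hf : PosHomogeneous f) (hy : y ≠ 0)
    (hdiff : DifferentiableAt ℝ f y) : fderiv ℝ f y y = f y := by
  have hlinear : HasDerivAt (fun α : ℝ => (1 + α) * f y) (f y) 0 := by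
    simpa using ((hasDerivAt_id (0 : ℝ)).const_add 1).mul_const (f y)
  refine (hasDerivAt_zero_comp_add_smul hdiff y).unique (hlinear.congr_of_eventuallyEq ?_)
  filter_upwards [lt_mem_nhds (show (-1 : ℝ) < 0 by norm_num)] with α hα
  rw [← hf (1 + α) (by linarith) y hy, add_smul, one_smul]

theorem PosHomogeneous.fderiv_smul (hf : PosHomogeneous f) {α : ℝ} (hα : 0 < α) (hy : y ≠ 0) :
    fderiv ℝ f (α • y) = fderiv ℝ f y := by
  have hhom : (fun z => f (α • z)) =ᶠ[𝓝 y] α • f := by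
    filter_upwards [isOpen_ne.mem_nhds hy] with z hz using hf α hα z hz
  have hsmul : α • fderiv ℝ f (α • y) = α • fderiv ℝ f y := by
    rw [← fderiv_comp_smul, hhom.fderiv_eq, fderiv_const_smul_field, Pi.smul_apply]
  exact smul_right_injective _ hα.ne' hsmul

theorem PosHomogeneous.fderiv_fderiv_apply_self (hf : PosHomogeneous f) (hy : y ≠ 0)
    (hdiff : DifferentiableAt ℝ (fderiv ℝ f) y) : fderiv ℝ (fderiv ℝ f) y y = 0 := by
  refine (hasDerivAt_zero_comp_add_smul hdiff y).unique
    ((hasDerivAt_const (0 : ℝ) (fderiv ℝ f y)).congr_of_eventuallyEq ?_)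
  filter_upwards [lt_mem_nhds (show (-1 : ℝ) < 0 by norm_num)] with α hα
  rw [← hf.fderiv_smul (by linarith : 0 < 1 + α) hy, add_smul, one_smul]

theorem PosHomogeneous.fderiv_fderiv_apply_add_smul (hf : PosHomogeneous f) (hy : y ≠ 0)
    (hC2 : ContDiffAt ℝ 2 f y) (α β : ℝ) :
    fderiv ℝ (fderiv ℝ f) y (α • y + β • v) (α • y + β • v) =
      β ^ 2 * fderiv ℝ (fderiv ℝ f) y v v := by
  have hfderiv : DifferentiableAt ℝ (fderiv ℝ f) y :=
    (hC2.fderiv_right (m := 1) (by norm_num)).differentiableAt one_ne_zero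
  have hleft : ∀ w, fderiv ℝ (fderiv ℝ f) y y w = 0 := fun w => by
    rw [hf.fderiv_fderiv_apply_self hy hfderiv, zero_apply]
  have hright : ∀ w, fderiv ℝ (fderiv ℝ f) y w y = 0 := fun w =>
    (hC2.isSymmSndFDerivAt (by simp) w y).trans (hleft w)
  simp only [map_add, map_smul, add_apply, smul_apply, hleft, hright, smul_eq_mul]
  ring

/-- Strong convexity of `f²` at `y`: its second Fréchet derivative there is positive definite.
Required at every `y ≠ 0`, this is what makes a positively homogeneous `f` a Minkowski norm. -/
def HasPosDefSqHessianAt (f : E → ℝ) (y : E) : Prop :=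
  ∀ θ : E, θ ≠ 0 → 0 < iteratedFDeriv ℝ 2 (fun z => f z ^ 2) y ![θ, θ]

theorem exists_eq_add_smul_of_finrank_eq_two (hE : finrank ℝ E = 2)
    (hyv : LinearIndependent ℝ ![y, v]) :
    ∃ a b : E →L[ℝ] ℝ, ∀ x, x = a x • y + b x • v := by
  have : FiniteDimensional ℝ E := .of_finrank_pos (by omega)
  let B := basisOfLinearIndependentOfCardEqFinrank hyv (by simp [hE])
  refine ⟨LinearMap.toContinuousLinearMap (B.coord 0),
    LinearMap.toContinuousLinearMap (B.coord 1), fun x => ?_⟩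
  simpa [B, Fin.sum_univ_two] using (B.sum_repr x).symm

theorem PosHomogeneous.hasPosDefSqHessianAt_iff (hE : finrank ℝ E = 2) (hf : PosHomogeneous f)
    (hpos : 0 < f y) (hC2 : ContDiffAt ℝ 2 f y) (hyv : LinearIndependent ℝ ![y, v]) :
    HasPosDefSqHessianAt f y ↔ 0 < fderiv ℝ (fderiv ℝ f) y v v := by
  have hy : y ≠ 0 := hyv.ne_zero 0
  have heuler := hf.fderiv_apply_self hy (hC2.differentiableAt two_ne_zero)
  simp only [HasPosDefSqHessianAt, iteratedFDeriv_two_sq_apply hC2]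
  constructor
  · intro hpd
    let θ : E := (-(fderiv ℝ f y v / f y)) • y + (1 : ℝ) • v
    have hθ : θ ≠ 0 := fun h => one_ne_zero (LinearIndependent.pair_iff.1 hyv _ _ h).2
    have htangent : fderiv ℝ f y θ = 0 := by
      simp only [θ, map_add, map_smul, heuler, smul_eq_mul]
      field_simp
      ring
    have hpdθ := hpd θ hθ
    rw [htangent, hf.fderiv_fderiv_apply_add_smul hy hC2] at hpdθ
    exact pos_of_mul_pos_right (by linarith : 0 < f y * fderiv ℝ (fderiv ℝ f) y v v) hpos.le
  · intro hv θ hθ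
    obtain ⟨a, b, hab⟩ := exists_eq_add_smul_of_finrank_eq_two hE hyv
    rw [hab θ, hf.fderiv_fderiv_apply_add_smul hy hC2]
    rcases eq_or_ne (b θ) 0 with hb | hb
    · have ha : a θ ≠ 0 := fun ha => hθ (by rw [hab θ, ha, hb]; simp)
      have hradial : fderiv ℝ f y (a θ • y + b θ • v) = a θ * f y := by simp [hb, heuler]
      rw [hradial, hb]
      positivity
    · positivity

end Homogeneous

section Sublinear

variable {E : Type*} [NormedAddCommGroup E] [NormedSpace ℝ E] {φ : E → ℝ} {x z ξ : E}

/-- Sublinear functionals: positively homogeneous and subadditive, with no sign condition. A weak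
Minkowski norm is in particular one of these. -/
structure IsSublinear (φ : E → ℝ) : Prop where
  map_smul_of_pos : ∀ α : ℝ, 0 < α → ∀ y, φ (α • y) = α * φ y
  map_add_le : ∀ y₁ y₂, φ (y₁ + y₂) ≤ φ y₁ + φ y₂

theorem IsSublinear.posHomogeneous (hφ : IsSublinear φ) : PosHomogeneous φ :=
  fun α hα y _ => hφ.map_smul_of_pos α hα y

theorem IsSublinear.map_zero (hφ : IsSublinear φ) : φ 0 = 0 := by
  have h := hφ.map_smul_of_pos 2 two_pos 0
  rw [smul_zero] at h
  linarith

theorem IsSublinear.map_smul_of_nonneg (hφ : IsSublinear φ) {α : ℝ} (hα : 0 ≤ α) (y : E) :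
    φ (α • y) = α * φ y := by
  rcases hα.eq_or_lt with rfl | hα
  · simp [hφ.map_zero]
  · exact hφ.map_smul_of_pos α hα y

theorem IsSublinear.convexOn (hφ : IsSublinear φ) : ConvexOn ℝ Set.univ φ := by
  refine ⟨convex_univ, fun y₁ _ y₂ _ a b ha hb _ => ?_⟩
  rw [smul_eq_mul, smul_eq_mul, ← hφ.map_smul_of_nonneg ha, ← hφ.map_smul_of_nonneg hb]
  exact hφ.map_add_le _ _

theorem IsSublinear.fderiv_apply_le (hφ : IsSublinear φ) (hdiff : DifferentiableAt ℝ φ ξ) (x : E) :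
    fderiv ℝ φ ξ x ≤ φ x := by
  refine le_of_tendsto (hasDerivAt_zero_comp_add_smul hdiff x).tendsto_slope_zero_right ?_
  filter_upwards [self_mem_nhdsWithin] with t (ht : 0 < t)
  have hsub := hφ.map_add_le ξ (t • x)
  rw [hφ.map_smul_of_pos t ht] at hsub
  simp only [zero_add, zero_smul, add_zero, smul_eq_mul]
  rw [inv_mul_le_iff₀ ht]
  linarith

/-- The map `z ↦ z - φ(z) x`. For `φ x < 1` it is the inverse of `y ↦ y + P(x, y) x`, so that `z`
serves as a coordinate on the directions `y` at `x` in which the metric becomes explicit. -/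
def funkShift (φ : E → ℝ) (x z : E) : E := z - φ z • x

theorem IsSublinear.funkShift_injective (hφ : IsSublinear φ) (hx : φ x < 1) :
    Function.Injective (funkShift φ x) := by
  intro z w hzw
  wlog hle : φ w ≤ φ z generalizing z w
  · exact (this hzw.symm (le_of_not_ge hle)).symm
  have hdecomp : z = w + (φ z - φ w) • x := by
    simp only [funkShift] at hzw
    rw [sub_smul, ← sub_eq_zero, ← sub_eq_zero.2 hzw]
    abel
  have hsub : φ z ≤ φ w + (φ z - φ w) * φ x := by
    conv_lhs => rw [hdecomp]
    rw [← hφ.map_smul_of_nonneg (sub_nonneg.2 hle)]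
    exact hφ.map_add_le _ _
  have heq : φ z = φ w := le_antisymm (by nlinarith) hle
  rwa [heq, sub_self, zero_smul, add_zero] at hdecomp

theorem IsSublinear.funkShift_ne_zero (hφ : IsSublinear φ) (hx : φ x < 1) (hz : z ≠ 0) :
    funkShift φ x z ≠ 0 := by
  have hzero : funkShift φ x 0 = 0 := by simp [funkShift, hφ.map_zero]
  exact hzero ▸ (hφ.funkShift_injective hx).ne hz

theorem IsSublinear.funkShift_smul (hφ : IsSublinear φ) {α : ℝ} (hα : 0 < α) (x z : E) :
    funkShift φ x (α • z) = α • funkShift φ x z := by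
  rw [funkShift, funkShift, hφ.map_smul_of_pos α hα, smul_sub, smul_smul]

/-- The rank-one perturbation `id - l ⊗ x` of the identity as an isomorphism, with the
Sherman–Morrison inverse `id + (1 - l x)⁻¹ l ⊗ x`. It is the derivative of `funkShift φ x` when
`l` is that of `φ`. -/
noncomputable def subSmulRightEquiv (l : E →L[ℝ] ℝ) (x : E) (hlx : l x < 1) : E ≃L[ℝ] E :=
  ContinuousLinearEquiv.equivOfInverse (.id ℝ E - l.smulRight x)
    (.id ℝ E + ((1 - l x)⁻¹ • l).smulRight x)
    (fun w => by
      have : 1 - l x ≠ 0 := (sub_pos.2 hlx).ne'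
      simp only [add_apply, sub_apply, ContinuousLinearMap.id_apply,
        ContinuousLinearMap.smulRight_apply, smul_apply, map_sub, map_smul, smul_eq_mul]
      match_scalars <;> field_simp
      ring)
    (fun w => by
      have : 1 - l x ≠ 0 := (sub_pos.2 hlx).ne'
      simp only [add_apply, sub_apply, ContinuousLinearMap.id_apply,
        ContinuousLinearMap.smulRight_apply, smul_apply, map_add, map_smul, smul_eq_mul]
      match_scalars <;> field_simp
      ring)

@[simp]
theorem subSmulRightEquiv_apply (l : E →L[ℝ] ℝ) (x : E) (hlx : l x < 1) (w : E) :
    subSmulRightEquiv l x hlx w = w - l w • x := rfl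

theorem subSmulRightEquiv_apply_self (l : E →L[ℝ] ℝ) (x : E) (hlx : l x < 1) :
    subSmulRightEquiv l x hlx x = (1 - l x) • x := by
  rw [subSmulRightEquiv_apply, sub_smul, one_smul]

theorem hasFDerivAt_funkShift (hdiff : DifferentiableAt ℝ φ z) (hlx : fderiv ℝ φ z x < 1) :
    HasFDerivAt (funkShift φ x) (subSmulRightEquiv (fderiv ℝ φ z) x hlx : E →L[ℝ] E) z :=
  (hasFDerivAt_id z).sub (hdiff.hasFDerivAt.smul_const x)

theorem contDiffAt_funkShift {n : WithTop ℕ∞} (hφ : ContDiffAt ℝ n φ z) :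
    ContDiffAt ℝ n (funkShift φ x) z :=
  contDiffAt_id.sub (hφ.smul contDiffAt_const)

end Sublinear

section FunkSolution

variable {E : Type*} [NormedAddCommGroup E] [NormedSpace ℝ E] {φ ψ p f : E → ℝ} {x y z : E}

/-- `p = P(x, ·)` solves the equation `P(x, y) = φ(y + P(x, y) x)` defining the Funk metric of
`{φ < 1}` at the point `x`. -/
def IsFunkSolution (φ : E → ℝ) (x : E) (p : E → ℝ) : Prop :=
  ∀ y, p y = φ (y + p y • x)

theorem IsFunkSolution.funkShift_add_smul (hp : IsFunkSolution φ x p) (y : E) :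
    funkShift φ x (y + p y • x) = y := by
  rw [funkShift, ← hp y, add_sub_cancel_right]

theorem IsFunkSolution.add_smul_funkShift (hp : IsFunkSolution φ x p) (hφ : IsSublinear φ)
    (hx : φ x < 1) (z : E) : funkShift φ x z + p (funkShift φ x z) • x = z :=
  hφ.funkShift_injective hx (hp.funkShift_add_smul _)

theorem IsFunkSolution.add_smul_ne_zero (hp : IsFunkSolution φ x p) (hφ : IsSublinear φ)
    (hy : y ≠ 0) : y + p y • x ≠ 0 := by
  intro h
  have hshift := hp.funkShift_add_smul y
  rw [h, funkShift, hφ.map_zero, zero_smul, sub_zero] at hshift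
  exact hy hshift.symm

-- The local inverse of `funkShift φ x` must agree with `y ↦ y + p y • x` by injectivity.
theorem IsFunkSolution.contDiffAt_add_smul [CompleteSpace E] (hp : IsFunkSolution φ x p)
    (hφ : IsSublinear φ) (hx : φ x < 1) {n : WithTop ℕ∞} (hn : n ≠ 0)
    (hφn : ContDiffAt ℝ n φ z) :
    ContDiffAt ℝ n (fun y => y + p y • x) (funkShift φ x z) := by
  have hdiff := hφn.differentiableAt hn
  have hshift := hasFDerivAt_funkShift hdiff ((hφ.fderiv_apply_le hdiff x).trans_lt hx)
  have hCn : ContDiffAt ℝ n (funkShift φ x) z := contDiffAt_funkShift hφn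
  refine (hCn.to_localInverse hshift hn).congr_of_eventuallyEq ?_
  filter_upwards [(hCn.hasStrictFDerivAt' hshift hn).eventually_right_inverse] with y hy
  exact hφ.funkShift_injective hx ((hp.funkShift_add_smul y).trans hy.symm)

theorem IsFunkSolution.one_add_fderiv_apply [CompleteSpace E] (hp : IsFunkSolution φ x p)
    (hφ : IsSublinear φ) (hx : φ x < 1) (hφ1 : ContDiffAt ℝ 1 φ z) :
    1 + fderiv ℝ p (funkShift φ x z) x = (1 - fderiv ℝ φ z x)⁻¹ := by
  have hinv : z = funkShift φ x z + p (funkShift φ x z) • x :=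
    (hp.add_smul_funkShift hφ hx z).symm
  set y := funkShift φ x z
  have hT : DifferentiableAt ℝ (fun y => y + p y • x) y :=
    (hp.contDiffAt_add_smul hφ hx one_ne_zero hφ1).differentiableAt one_ne_zero
  have hφz : DifferentiableAt ℝ φ z := hφ1.differentiableAt one_ne_zero
  have hpeq : p = φ ∘ fun y => y + p y • x := funext hp
  have hpy : DifferentiableAt ℝ p y := by
    rw [hpeq]
    exact DifferentiableAt.comp y (hinv ▸ hφz) hT
  have hchain : fderiv ℝ p y x = fderiv ℝ φ z (x + fderiv ℝ p y x • x) := by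
    have hT' : HasFDerivAt (fun y => y + p y • x) (.id ℝ E + (fderiv ℝ p y).smulRight x) y :=
      (hasFDerivAt_id y).add (hpy.hasFDerivAt.smul_const x)
    have hcomp := (show HasFDerivAt φ (fderiv ℝ φ z) (y + p y • x) from
      hinv ▸ hφz.hasFDerivAt).comp y hT'
    rw [← hpeq] at hcomp
    simpa using DFunLike.congr_fun hcomp.fderiv x
  have hlt : fderiv ℝ φ z x < 1 := (hφ.fderiv_apply_le hφz x).trans_lt hx
  rw [map_add, map_smul, smul_eq_mul] at hchain
  exact eq_inv_of_mul_eq_one_left (by linear_combination hchain)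

/-- The metric at `x` read in the coordinate `z` of `funkShift φ x`. -/
noncomputable def shiftedMetric (ψ φ : E → ℝ) (x z : E) : ℝ :=
  ψ z / (1 - fderiv ℝ φ z x)

theorem contDiffAt_shiftedMetric {m n : WithTop ℕ∞} (hψ : ContDiffAt ℝ m ψ z)
    (hφ : ContDiffAt ℝ n φ z) (hmn : m + 1 ≤ n) (hlx : fderiv ℝ φ z x < 1) :
    ContDiffAt ℝ m (shiftedMetric ψ φ x) z :=
  hψ.div (contDiffAt_const.sub ((hφ.fderiv_right hmn).clm_apply contDiffAt_const))
    (sub_pos.2 hlx).ne'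

theorem PosHomogeneous.shiftedMetric (hψ : PosHomogeneous ψ) (hφ : PosHomogeneous φ) (x : E) :
    PosHomogeneous (shiftedMetric ψ φ x) := by
  intro α hα z hz
  simp only [_root_.shiftedMetric]
  rw [hφ.fderiv_smul hα hz, hψ α hα z hz, mul_div_assoc]

/-- `f = F(x, ·)` is the metric attached to `ψ`, `φ` and the solution `p = P(x, ·)`. -/
def IsFunkMetric (ψ : E → ℝ) (x : E) (p f : E → ℝ) : Prop :=
  ∀ y, y ≠ 0 → f y = ψ (y + p y • x) * (1 + fderiv ℝ p y x)

theorem IsFunkMetric.apply_funkShift [CompleteSpace E] (hf : IsFunkMetric ψ x p f)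
    (hp : IsFunkSolution φ x p) (hφ : IsSublinear φ) (hx : φ x < 1) (hz : z ≠ 0)
    (hφ1 : ContDiffAt ℝ 1 φ z) : f (funkShift φ x z) = shiftedMetric ψ φ x z := by
  rw [hf _ (hφ.funkShift_ne_zero hx hz), hp.add_smul_funkShift hφ hx,
    hp.one_add_fderiv_apply hφ hx hφ1, shiftedMetric, div_eq_mul_inv]

theorem IsFunkMetric.posHomogeneous [CompleteSpace E] (hf : IsFunkMetric ψ x p f)
    (hp : IsFunkSolution φ x p) (hφ : IsSublinear φ) (hx : φ x < 1)
    (hφ1 : ∀ z, z ≠ 0 → ContDiffAt ℝ 1 φ z) (hψ : PosHomogeneous ψ) : PosHomogeneous f := by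
  intro α hα y hy
  obtain ⟨z, hz, rfl⟩ : ∃ z, z ≠ 0 ∧ funkShift φ x z = y :=
    ⟨_, hp.add_smul_ne_zero hφ hy, hp.funkShift_add_smul y⟩
  have hαz : α • z ≠ 0 := smul_ne_zero hα.ne' hz
  rw [← hφ.funkShift_smul hα, hf.apply_funkShift hp hφ hx hαz (hφ1 _ hαz),
    hf.apply_funkShift hp hφ hx hz (hφ1 z hz),
    hψ.shiftedMetric hφ.posHomogeneous x α hα z hz]

theorem IsFunkMetric.contDiffAt [CompleteSpace E] (hf : IsFunkMetric ψ x p f)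
    (hp : IsFunkSolution φ x p) (hφ : IsSublinear φ) (hx : φ x < 1)
    {n : WithTop ℕ∞} (hn : n ≠ 0) (hφn : ∀ z, z ≠ 0 → ContDiffAt ℝ (n + 1) φ z) (hz : z ≠ 0)
    (hψ : ContDiffAt ℝ n ψ z) : ContDiffAt ℝ n f (funkShift φ x z) := by
  have hφ1 : ∀ z, z ≠ 0 → ContDiffAt ℝ 1 φ z := fun z hz => (hφn z hz).of_le le_add_self
  have hlt : fderiv ℝ φ z x < 1 :=
    (hφ.fderiv_apply_le ((hφ1 z hz).differentiableAt one_ne_zero) x).trans_lt hx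
  have hT : ContDiffAt ℝ n (fun y => y + p y • x) (funkShift φ x z) :=
    hp.contDiffAt_add_smul hφ hx hn ((hφn z hz).of_le le_self_add)
  have hmetric : ContDiffAt ℝ n (shiftedMetric ψ φ x)
      (funkShift φ x z + p (funkShift φ x z) • x) := by
    rw [hp.add_smul_funkShift hφ hx]
    exact contDiffAt_shiftedMetric hψ (hφn z hz) le_rfl hlt
  refine (hmetric.comp (funkShift φ x z) hT).congr_of_eventuallyEq ?_
  filter_upwards [isOpen_ne.mem_nhds (hφ.funkShift_ne_zero hx hz)] with y hy
  have hTy := hp.add_smul_ne_zero hφ hy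
  rw [Function.comp_apply, ← hf.apply_funkShift hp hφ hx hTy (hφ1 _ hTy),
    hp.funkShift_add_smul]

end FunkSolution

section Line

variable {E : Type*} [NormedAddCommGroup E] [NormedSpace ℝ E] {f : E → ℝ} {ξ e : E}

theorem add_smul_ne_zero_of_linearIndependent (hξe : LinearIndependent ℝ ![ξ, e]) (t : ℝ) :
    ξ + t • e ≠ 0 := fun h =>
  one_ne_zero (LinearIndependent.pair_iff.1 hξe 1 t (by rwa [one_smul])).1

theorem contDiff_comp_add_smul {n : WithTop ℕ∞} (hf : ∀ z, z ≠ 0 → ContDiffAt ℝ n f z)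
    (hξe : LinearIndependent ℝ ![ξ, e]) : ContDiff ℝ n fun t : ℝ => f (ξ + t • e) :=
  contDiff_iff_contDiffAt.2 fun t =>
    (hf _ (add_smul_ne_zero_of_linearIndependent hξe t)).comp t (by fun_prop)

theorem PosHomogeneous.fderiv_apply_on_line (hf : PosHomogeneous f) {t : ℝ} (hne : ξ + t • e ≠ 0)
    (hdiff : DifferentiableAt ℝ f (ξ + t • e)) (a b : ℝ) :
    fderiv ℝ f (ξ + t • e) (a • ξ + b • e) =
      a * (f (ξ + t • e) - t * deriv (fun t : ℝ => f (ξ + t • e)) t) +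
        b * deriv (fun t : ℝ => f (ξ + t • e)) t := by
  have heuler := hf.fderiv_apply_self hne hdiff
  rw [map_add, map_smul, smul_eq_mul] at heuler
  rw [(hasDerivAt_comp_add_smul hdiff).deriv, map_add, map_smul, map_smul, smul_eq_mul,
    smul_eq_mul]
  linear_combination a * heuler

/-- The quadratic polynomial which governs strong convexity of the metric: `s` and `p` are the
restrictions of `ψ` and `φ` to a line through the direction considered, and the base point enters
only through `r`. -/
noncomputable def convexityQuadratic (s p : ℝ → ℝ) (r : ℝ) : ℝ :=
  iteratedDeriv 2 s 0 + (3 * deriv s 0 * iteratedDeriv 2 p 0 + s 0 * iteratedDeriv 3 p 0) * r +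
    3 * s 0 * iteratedDeriv 2 p 0 ^ 2 * r ^ 2

theorem hasDerivAt_iteratedDeriv_of_contDiff {p : ℝ → ℝ} {n : WithTop ℕ∞}
    (hp : ContDiff ℝ n p) {k : ℕ} (hk : k < n) (t : ℝ) :
    HasDerivAt (iteratedDeriv k p) (iteratedDeriv (k + 1) p t) t := by
  rw [iteratedDeriv_succ]
  exact (hp.differentiable_iteratedDeriv k hk t).hasDerivAt

theorem iteratedDeriv_two_mul {f g : ℝ → ℝ} {t : ℝ} (hf : ContDiffAt ℝ 2 f t)
    (hg : ContDiffAt ℝ 2 g t) :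
    iteratedDeriv 2 (f * g) t =
      iteratedDeriv 2 f t * g t + 2 * deriv f t * deriv g t + f t * iteratedDeriv 2 g t := by
  rw [iteratedDeriv_mul hf hg]
  simp only [Finset.sum_range_succ, Finset.sum_range_zero, iteratedDeriv_zero, iteratedDeriv_one,
    Nat.choose_zero_right, Nat.choose_one_right, Nat.choose_self, Nat.cast_one, Nat.cast_ofNat,
    Nat.reduceAdd, Nat.reduceSub]
  ring

/-- The function `1 - Dφ(·) x` along the line `ξ + t e` for `x = a ξ + b e`, expressed by means of
Euler's relation through the restriction `p` of `φ` to that line. -/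
noncomputable def lineDenom (p : ℝ → ℝ) (a b t : ℝ) : ℝ :=
  1 - (a * (p t - t * deriv p t) + b * deriv p t)

theorem contDiff_lineDenom {p : ℝ → ℝ} (hp : ContDiff ℝ 3 p) (a b : ℝ) :
    ContDiff ℝ 2 (lineDenom p a b) := by
  have hp0 : ContDiff ℝ 2 p := hp.of_le (by norm_num)
  have hp1 : ContDiff ℝ 2 (deriv p) := hp.deriv'
  exact contDiff_const.sub ((contDiff_const.mul (hp0.sub (contDiff_id.mul hp1))).add
    (contDiff_const.mul hp1))

theorem deriv_lineDenom {p : ℝ → ℝ} (hp : ContDiff ℝ 2 p) (a b : ℝ) :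
    deriv (lineDenom p a b) = fun t => (a * t - b) * iteratedDeriv 2 p t := by
  funext t
  have hp0 : HasDerivAt p (deriv p t) t := (hp.differentiable two_ne_zero t).hasDerivAt
  have hp1 : HasDerivAt (deriv p) (iteratedDeriv 2 p t) t := by
    simpa using hasDerivAt_iteratedDeriv_of_contDiff hp (k := 1) (by norm_num) t
  refine ((((hp0.sub ((hasDerivAt_id t).mul hp1)).const_mul a).add
    (hp1.const_mul b)).const_sub 1).deriv.trans ?_
  simp only [id_eq]
  ring

theorem iteratedDeriv_two_lineDenom_zero {p : ℝ → ℝ} (hp : ContDiff ℝ 3 p) (a b : ℝ) :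
    iteratedDeriv 2 (lineDenom p a b) 0 = a * iteratedDeriv 2 p 0 - b * iteratedDeriv 3 p 0 := by
  rw [iteratedDeriv_succ, iteratedDeriv_one, deriv_lineDenom (hp.of_le (by norm_num))]
  refine ((((hasDerivAt_id (0 : ℝ)).const_mul a).sub_const b).mul
    (hasDerivAt_iteratedDeriv_of_contDiff hp (by norm_num) 0)).deriv.trans ?_
  simp only [id_eq]
  ring

-- No `a` occurs in `convexityQuadratic`: the term it contributes to the second derivative of the
-- denominator is cancelled by the last summand on the right.
theorem convexityQuadratic_mul_lineDenom {p g : ℝ → ℝ} {a b : ℝ} (hp : ContDiff ℝ 3 p)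
    (hg : ContDiff ℝ 2 g) (hd : lineDenom p a b 0 ≠ 0) :
    convexityQuadratic (g * lineDenom p a b) p (b / lineDenom p a b 0) =
      lineDenom p a b 0 * iteratedDeriv 2 g 0 +
        iteratedDeriv 2 p 0 * (a * g 0 + b * deriv g 0) := by
  have hlineDenom := contDiff_lineDenom hp a b
  rw [convexityQuadratic, iteratedDeriv_two_mul hg.contDiffAt hlineDenom.contDiffAt,
    iteratedDeriv_two_lineDenom_zero hp,
    deriv_mul (hg.differentiable two_ne_zero 0) (hlineDenom.differentiable two_ne_zero 0),
    deriv_lineDenom (hp.of_le (by norm_num)), Pi.mul_apply]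
  field_simp
  ring

end Line

section Hessian

variable {E : Type*} [NormedAddCommGroup E] [NormedSpace ℝ E] {φ ψ p f : E → ℝ} {x ξ e : E}

theorem fderiv_fderiv_funkShift (hf : ContDiffAt ℝ 2 f (funkShift φ x ξ))
    (hφ : ContDiff ℝ 2 fun t : ℝ => φ (ξ + t • e)) (hφξ : DifferentiableAt ℝ φ ξ)
    (hlx : fderiv ℝ φ ξ x < 1) :
    fderiv ℝ (fderiv ℝ f) (funkShift φ x ξ) (subSmulRightEquiv (fderiv ℝ φ ξ) x hlx e)
        (subSmulRightEquiv (fderiv ℝ φ ξ) x hlx e) =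
      iteratedDeriv 2 (fun t : ℝ => f (funkShift φ x (ξ + t • e))) 0 +
        iteratedDeriv 2 (fun t : ℝ => φ (ξ + t • e)) 0 * fderiv ℝ f (funkShift φ x ξ) x := by
  set q : ℝ → ℝ := fun t => φ (ξ + t • e)
  have hcurve : ∀ t, HasDerivAt (fun t : ℝ => funkShift φ x (ξ + t • e)) (e - deriv q t • x) t :=
    fun t => (hasDerivAt_add_smul ξ e t).sub
      ((hφ.differentiable two_ne_zero t).hasDerivAt.smul_const x)
  have hcurve' : HasDerivAt (fun t => e - deriv q t • x) (-(iteratedDeriv 2 q 0 • x)) 0 := by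
    have hq : HasDerivAt (deriv q) (iteratedDeriv 2 q 0) 0 := by
      simpa using hasDerivAt_iteratedDeriv_of_contDiff hφ (k := 1) (by norm_num) 0
    exact (hq.smul_const x).const_sub e
  have hchain := iteratedDeriv_two_comp_curve (t₀ := 0)
    (by simpa only [zero_smul, add_zero] using hf) hcurve hcurve'
  have hq0 : deriv q 0 = fderiv ℝ φ ξ e := (hasDerivAt_zero_comp_add_smul hφξ e).deriv
  simp only [zero_smul, add_zero, hq0, map_neg, map_smul, smul_eq_mul] at hchain
  rw [subSmulRightEquiv_apply]
  change iteratedDeriv 2 (fun t : ℝ => f (funkShift φ x (ξ + t • e))) 0 = _ at hchain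
  rw [hchain]
  ring

theorem fderiv_comp_funkShift_apply_self (hf : DifferentiableAt ℝ f (funkShift φ x ξ))
    (hφ : DifferentiableAt ℝ φ ξ) (hlx : fderiv ℝ φ ξ x < 1) :
    fderiv ℝ (f ∘ funkShift φ x) ξ x = (1 - fderiv ℝ φ ξ x) * fderiv ℝ f (funkShift φ x ξ) x := by
  rw [(hf.hasFDerivAt.comp ξ (hasFDerivAt_funkShift hφ hlx)).fderiv,
    ContinuousLinearMap.comp_apply, ContinuousLinearEquiv.coe_coe, subSmulRightEquiv_apply_self,
    map_smul, smul_eq_mul]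

theorem IsFunkMetric.one_sub_fderiv_mul_fderiv_apply [CompleteSpace E] (hf : IsFunkMetric ψ x p f)
    (hp : IsFunkSolution φ x p) (hφ : IsSublinear φ) (hx : φ x < 1)
    (hφ1 : ∀ z, z ≠ 0 → ContDiffAt ℝ 1 φ z) (hξ : ξ ≠ 0)
    (hfξ : DifferentiableAt ℝ f (funkShift φ x ξ)) :
    (1 - fderiv ℝ φ ξ x) * fderiv ℝ f (funkShift φ x ξ) x =
      fderiv ℝ (shiftedMetric ψ φ x) ξ x := by
  have hφξ : DifferentiableAt ℝ φ ξ := (hφ1 ξ hξ).differentiableAt one_ne_zero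
  have hlocal : f ∘ funkShift φ x =ᶠ[𝓝 ξ] shiftedMetric ψ φ x := by
    filter_upwards [isOpen_ne.mem_nhds hξ] with z hz
    exact hf.apply_funkShift hp hφ hx hz (hφ1 z hz)
  rw [← hlocal.fderiv_eq, fderiv_comp_funkShift_apply_self hfξ hφξ
    ((hφ.fderiv_apply_le hφξ x).trans_lt hx)]

theorem PosHomogeneous.one_sub_fderiv_apply_on_line (hφ : PosHomogeneous φ) {t : ℝ}
    (hne : ξ + t • e ≠ 0) (hdiff : DifferentiableAt ℝ φ (ξ + t • e)) (a b : ℝ) :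
    1 - fderiv ℝ φ (ξ + t • e) (a • ξ + b • e) =
      lineDenom (fun t : ℝ => φ (ξ + t • e)) a b t := by
  rw [lineDenom, hφ.fderiv_apply_on_line hne hdiff]

theorem IsSublinear.shiftedMetric_on_line_mul_lineDenom (hφ : IsSublinear φ)
    (hφ1 : ∀ z, z ≠ 0 → DifferentiableAt ℝ φ z) (hξe : LinearIndependent ℝ ![ξ, e]) {a b : ℝ}
    (hx : φ (a • ξ + b • e) < 1) (ψ : E → ℝ) :
    (fun t : ℝ => shiftedMetric ψ φ (a • ξ + b • e) (ξ + t • e)) *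
        lineDenom (fun t : ℝ => φ (ξ + t • e)) a b =
      fun t : ℝ => ψ (ξ + t • e) := by
  funext t
  have hne := add_smul_ne_zero_of_linearIndependent hξe t
  rw [Pi.mul_apply, ← hφ.posHomogeneous.one_sub_fderiv_apply_on_line hne (hφ1 _ hne)]
  exact div_mul_cancel₀ _ (sub_pos.2 ((hφ.fderiv_apply_le (hφ1 _ hne) _).trans_lt hx)).ne'

theorem IsFunkMetric.one_sub_fderiv_mul_fderiv_fderiv [CompleteSpace E] {a b : ℝ}
    (hf : IsFunkMetric ψ (a • ξ + b • e) p f) (hp : IsFunkSolution φ (a • ξ + b • e) p)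
    (hφ : IsSublinear φ) (hx : φ (a • ξ + b • e) < 1)
    (hφ3 : ∀ z, z ≠ 0 → ContDiffAt ℝ 3 φ z) (hψ : PosHomogeneous ψ)
    (hψ2 : ∀ z, z ≠ 0 → ContDiffAt ℝ 2 ψ z) (hξe : LinearIndependent ℝ ![ξ, e])
    (hlx : fderiv ℝ φ ξ (a • ξ + b • e) < 1) :
    (1 - fderiv ℝ φ ξ (a • ξ + b • e)) *
        fderiv ℝ (fderiv ℝ f) (funkShift φ (a • ξ + b • e) ξ)
          (subSmulRightEquiv (fderiv ℝ φ ξ) (a • ξ + b • e) hlx e)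
          (subSmulRightEquiv (fderiv ℝ φ ξ) (a • ξ + b • e) hlx e) =
      convexityQuadratic (fun t : ℝ => ψ (ξ + t • e)) (fun t : ℝ => φ (ξ + t • e))
        (b / (1 - fderiv ℝ φ ξ (a • ξ + b • e))) := by
  have hξ : ξ ≠ 0 := hξe.ne_zero 0
  have hne := add_smul_ne_zero_of_linearIndependent hξe
  have hφ1 : ∀ z, z ≠ 0 → ContDiffAt ℝ 1 φ z := fun z hz => (hφ3 z hz).of_le (by norm_num)
  have hφd : ∀ z, z ≠ 0 → DifferentiableAt ℝ φ z := fun z hz =>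
    (hφ1 z hz).differentiableAt one_ne_zero
  have hf2 := hf.contDiffAt hp hφ hx two_ne_zero hφ3 hξ (hψ2 ξ hξ)
  have hφline := contDiff_comp_add_smul hφ3 hξe
  have hdenom : 1 - fderiv ℝ φ ξ (a • ξ + b • e) =
      lineDenom (fun t : ℝ => φ (ξ + t • e)) a b 0 := by
    simpa using hφ.posHomogeneous.one_sub_fderiv_apply_on_line (hne 0) (hφd _ (hne 0)) a b
  set G := shiftedMetric ψ φ (a • ξ + b • e)
  have hG2 : ∀ z, z ≠ 0 → ContDiffAt ℝ 2 G z := fun z hz =>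
    contDiffAt_shiftedMetric (hψ2 z hz) (hφ3 z hz) (by norm_num)
      ((hφ.fderiv_apply_le (hφd z hz) _).trans_lt hx)
  have hline : (fun t : ℝ => f (funkShift φ (a • ξ + b • e) (ξ + t • e))) =
      fun t : ℝ => G (ξ + t • e) :=
    funext fun t => hf.apply_funkShift hp hφ hx (hne t) (hφ1 _ (hne t))
  have hfirst : fderiv ℝ G ξ (a • ξ + b • e) =
      a * G (ξ + (0 : ℝ) • e) + b * deriv (fun t : ℝ => G (ξ + t • e)) 0 := by
    simpa using (hψ.shiftedMetric hφ.posHomogeneous _).fderiv_apply_on_line (hne 0)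
      ((hG2 _ (hne 0)).differentiableAt two_ne_zero) a b
  rw [fderiv_fderiv_funkShift hf2 (hφline.of_le (by norm_num)) (hφd ξ hξ) hlx, hline, mul_add,
    mul_left_comm, hf.one_sub_fderiv_mul_fderiv_apply hp hφ hx hφ1 hξ
      (hf2.differentiableAt two_ne_zero), hfirst, hdenom,
    ← hφ.shiftedMetric_on_line_mul_lineDenom hφd hξe hx ψ,
    convexityQuadratic_mul_lineDenom hφline (contDiff_comp_add_smul hG2 hξe)
      (hdenom ▸ (sub_pos.2 hlx).ne')]

theorem PosHomogeneous.linearIndependent_funkShift (hφ : PosHomogeneous φ)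
    (hφξ : DifferentiableAt ℝ φ ξ) (hξe : LinearIndependent ℝ ![ξ, e])
    (hlx : fderiv ℝ φ ξ x < 1) :
    LinearIndependent ℝ ![funkShift φ x ξ, subSmulRightEquiv (fderiv ℝ φ ξ) x hlx e] := by
  have heuler : fderiv ℝ φ ξ ξ = φ ξ := hφ.fderiv_apply_self (hξe.ne_zero 0) hφξ
  have hmap := hξe.map' (subSmulRightEquiv (fderiv ℝ φ ξ) x hlx : E →ₗ[ℝ] E)
    (LinearMap.ker_eq_bot.2 (subSmulRightEquiv (fderiv ℝ φ ξ) x hlx).injective)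
  have himage : (subSmulRightEquiv (fderiv ℝ φ ξ) x hlx : E →ₗ[ℝ] E) ∘ ![ξ, e] =
      ![funkShift φ x ξ, subSmulRightEquiv (fderiv ℝ φ ξ) x hlx e] := by
    funext i
    fin_cases i
    · simp [funkShift, heuler]
    · simp
  exact himage ▸ hmap

theorem IsFunkMetric.hasPosDefSqHessianAt_iff (hE : finrank ℝ E = 2) (hf : IsFunkMetric ψ x p f)
    (hp : IsFunkSolution φ x p) (hφ : IsSublinear φ) (hx : φ x < 1)
    (hφ3 : ∀ z, z ≠ 0 → ContDiffAt ℝ 3 φ z) (hψ : PosHomogeneous ψ)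
    (hψξ : 0 < ψ ξ) (hψ2 : ∀ z, z ≠ 0 → ContDiffAt ℝ 2 ψ z)
    (hξe : LinearIndependent ℝ ![ξ, e]) {a b : ℝ} (hab : x = a • ξ + b • e) :
    HasPosDefSqHessianAt f (funkShift φ x ξ) ↔
      0 < convexityQuadratic (fun t : ℝ => ψ (ξ + t • e)) (fun t : ℝ => φ (ξ + t • e))
        (b / (1 - fderiv ℝ φ ξ x)) := by
  have : FiniteDimensional ℝ E := .of_finrank_pos (by omega)
  have : CompleteSpace E := FiniteDimensional.complete ℝ E
  have hξ : ξ ≠ 0 := hξe.ne_zero 0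
  have hφ1 : ∀ z, z ≠ 0 → ContDiffAt ℝ 1 φ z := fun z hz => (hφ3 z hz).of_le (by norm_num)
  have hφξ : DifferentiableAt ℝ φ ξ := (hφ1 ξ hξ).differentiableAt one_ne_zero
  have hlx : fderiv ℝ φ ξ x < 1 := (hφ.fderiv_apply_le hφξ x).trans_lt hx
  have hpos : 0 < f (funkShift φ x ξ) := by
    rw [hf.apply_funkShift hp hφ hx hξ (hφ1 ξ hξ)]
    exact div_pos hψξ (sub_pos.2 hlx)
  subst hab
  rw [(hf.posHomogeneous hp hφ hx hφ1 hψ).hasPosDefSqHessianAt_iff hE hpos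
      (hf.contDiffAt hp hφ hx two_ne_zero hφ3 hξ (hψ2 ξ hξ))
      (hφ.posHomogeneous.linearIndependent_funkShift hφξ hξe hlx),
    ← hf.one_sub_fderiv_mul_fderiv_fderiv hp hφ hx hφ3 hψ hψ2 hξe hlx,
    mul_pos_iff_of_pos_left (sub_pos.2 hlx)]

end Hessian

theorem exists_clm_hasPosDefSqHessianAt_iff {E : Type*} [NormedAddCommGroup E] [NormedSpace ℝ E]
    (hE : finrank ℝ E = 2) {ψ φ : E → ℝ} {P F : E → E → ℝ} (hφ : IsSublinear φ)
    (hφ3 : ∀ z, z ≠ 0 → ContDiffAt ℝ 3 φ z) (hψ : PosHomogeneous ψ)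
    (hψpos : ∀ z, z ≠ 0 → 0 < ψ z) (hψ2 : ∀ z, z ≠ 0 → ContDiffAt ℝ 2 ψ z)
    (hP : ∀ x, φ x < 1 → IsFunkSolution φ x (P x))
    (hF : ∀ x, φ x < 1 → IsFunkMetric ψ x (P x) (F x)) {ξ : E} (hξ : ξ ≠ 0) {m : E}
    (hm : φ m < 1) :
    ∃ l : E →L[ℝ] ℝ, ∀ x, φ x < 1 → l x = l m →
      (HasPosDefSqHessianAt (F x) (funkShift φ x ξ) ↔
        HasPosDefSqHessianAt (F m) (funkShift φ m ξ)) := by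
  obtain ⟨e, hξe⟩ :=
    exists_linearIndependent_pair_of_one_lt_finrank (R := ℝ) (by omega : 1 < finrank ℝ E) hξ
  obtain ⟨a, b, hab⟩ := exists_eq_add_smul_of_finrank_eq_two hE hξe
  have hdenom : ∀ x, φ x < 1 → 1 - fderiv ℝ φ ξ x ≠ 0 := fun x hx =>
    (sub_pos.2 ((hφ.fderiv_apply_le
      ((hφ3 ξ hξ).differentiableAt three_ne_zero) x).trans_lt hx)).ne'
  -- The level set of `b x / (1 - Dφ(ξ) x)` through `m` is a line.
  set r := b m / (1 - fderiv ℝ φ ξ m)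
  have hr : b m = r * (1 - fderiv ℝ φ ξ m) := (div_mul_cancel₀ _ (hdenom m hm)).symm
  refine ⟨b + r • fderiv ℝ φ ξ, fun x hx hxm => ?_⟩
  simp only [add_apply, smul_apply, smul_eq_mul] at hxm
  have hrx : b x / (1 - fderiv ℝ φ ξ x) = r := by
    rw [div_eq_iff (hdenom x hx)]
    linear_combination hxm + hr
  rw [(hF x hx).hasPosDefSqHessianAt_iff hE (hP x hx) hφ hx hφ3 hψ (hψpos ξ hξ) hψ2 hξe (hab x),
    (hF m hm).hasPosDefSqHessianAt_iff hE (hP m hm) hφ hm hφ3 hψ (hψpos ξ hξ) hψ2 hξe (hab m),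
    hrx]

theorem stmt_16_general {E : Type*} [NormedAddCommGroup E] [NormedSpace ℝ E]
    (hE : finrank ℝ E = 2) {ψ φ : E → ℝ} {P F : E → E → ℝ} (hφ : IsSublinear φ)
    (hφ3 : ∀ z, z ≠ 0 → ContDiffAt ℝ 3 φ z) (hψ : PosHomogeneous ψ)
    (hψpos : ∀ z, z ≠ 0 → 0 < ψ z) (hψ2 : ∀ z, z ≠ 0 → ContDiffAt ℝ 2 ψ z)
    (hP : ∀ x, φ x < 1 → IsFunkSolution φ x (P x))
    (hF : ∀ x, φ x < 1 → IsFunkMetric ψ x (P x) (F x)) (x : E) :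
    Convex ℝ (connectedComponentIn
      {x | φ x < 1 ∧ ∀ y, y ≠ 0 → HasPosDefSqHessianAt (F x) y} x) := by
  refine convex_connectedComponentIn_of_hyperplanes (Ω := {x | φ x < 1})
    (by simpa using hφ.convexOn.convex_lt 1) (fun x hx => hx.1) ?_ x
  rintro m ⟨hm : φ m < 1, hmO⟩
  obtain ⟨y, hy, hfail⟩ : ∃ y, y ≠ 0 ∧ ¬ HasPosDefSqHessianAt (F m) y := by
    by_contra! hall
    exact hmO ⟨hm, hall⟩
  set ξ := y + P m y • m
  have hξ : ξ ≠ 0 := (hP m hm).add_smul_ne_zero hφ hy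
  obtain ⟨l, hl⟩ := exists_clm_hasPosDefSqHessianAt_iff hE hφ hφ3 hψ hψpos hψ2 hP hF hξ hm
  refine ⟨l, fun x hx hxm => hfail ?_⟩
  rw [← (hP m hm).funkShift_add_smul y, ← hl x hx.1 hxm]
  exact hx.2 _ (hφ.funkShift_ne_zero hx.1 hξ)

/-- In dimension 2, for the projectively flat metric
`F(x,y) = ψ(y + P(x,y)•x)·(1 + D_yP(x,y)(x))` of zero flag curvature built from a
Minkowski norm `ψ` and a weak Minkowski norm `φ`, every connected component of the set `𝒪`
of points `x` at which `F(x,·)` is a Minkowski norm is convex. -/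
theorem stmt_16
    (ψ φ : EuclideanSpace ℝ (Fin 2) → ℝ)
    -- `ψ` is a Minkowski norm
    (hψhom : ∀ α : ℝ, 0 < α → ∀ y, ψ (α • y) = α * ψ y)
    (hψpos : ∀ y : EuclideanSpace ℝ (Fin 2), y ≠ 0 → 0 < ψ y)
    (hψsmooth : ContDiffOn ℝ (⊤ : ℕ∞) ψ {y | y ≠ 0})
    (hψpd : ∀ y : EuclideanSpace ℝ (Fin 2), y ≠ 0 →
      ∀ θ : EuclideanSpace ℝ (Fin 2), θ ≠ 0 →
        0 < iteratedFDeriv ℝ 2 (fun z => ψ z ^ 2) y ![θ, θ])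
    -- `φ` is a weak Minkowski norm
    (hφhom : ∀ α : ℝ, 0 < α → ∀ y, φ (α • y) = α * φ y)
    (hφpos : ∀ y : EuclideanSpace ℝ (Fin 2), y ≠ 0 → 0 < φ y)
    (hφsmooth : ContDiffOn ℝ (⊤ : ℕ∞) φ {y | y ≠ 0})
    (hφsub : ∀ y₁ y₂, φ (y₁ + y₂) ≤ φ y₁ + φ y₂)
    (hφreg : ∀ y₁ y₂, φ (y₁ + y₂) = φ y₁ + φ y₂ →
      ∃ (v : EuclideanSpace ℝ (Fin 2)) (c₁ c₂ : ℝ),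
        0 ≤ c₁ ∧ 0 ≤ c₂ ∧ y₁ = c₁ • v ∧ y₂ = c₂ • v)
    -- `P` is the unique (smooth) solution of `P = φ(y + P•x)` on `Ω = {φ < 1}`
    (P : EuclideanSpace ℝ (Fin 2) → EuclideanSpace ℝ (Fin 2) → ℝ)
    (hP : ∀ x, φ x < 1 → ∀ y, P x y = φ (y + P x y • x))
    (hPuniq : ∀ x, φ x < 1 → ∀ y, ∀ t : ℝ, t = φ (y + t • x) → t = P x y)
    (hPsmooth : ContDiffOn ℝ (⊤ : ℕ∞)
      (fun p : EuclideanSpace ℝ (Fin 2) × EuclideanSpace ℝ (Fin 2) => P p.1 p.2)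
      ({x | φ x < 1} ×ˢ {y | y ≠ 0}))
    -- `F` is the associated metric
    (F : EuclideanSpace ℝ (Fin 2) → EuclideanSpace ℝ (Fin 2) → ℝ)
    (hF : ∀ x, φ x < 1 → ∀ y : EuclideanSpace ℝ (Fin 2), y ≠ 0 →
      F x y = ψ (y + P x y • x) * (1 + fderiv ℝ (fun z => P x z) y x))
    -- `O` is the set on which `F(x,·)` is a Minkowski norm
    (O : Set (EuclideanSpace ℝ (Fin 2)))
    (hO : O = {x | φ x < 1 ∧ ∀ y : EuclideanSpace ℝ (Fin 2), y ≠ 0 →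
      ∀ θ : EuclideanSpace ℝ (Fin 2), θ ≠ 0 →
        0 < iteratedFDeriv ℝ 2 (fun z => F x z ^ 2) y ![θ, θ]}) :
    ∀ x ∈ O, Convex ℝ (connectedComponentIn O x) := by
  subst hO
  have contDiffAt_of_ne_zero {f : EuclideanSpace ℝ (Fin 2) → ℝ} (n : ℕ)
      (hf : ContDiffOn ℝ (⊤ : ℕ∞) f {y | y ≠ 0}) (z : EuclideanSpace ℝ (Fin 2)) (hz : z ≠ 0) :
      ContDiffAt ℝ n f z :=
    (hf.contDiffAt (isOpen_ne.mem_nhds hz)).of_le (by exact_mod_cast le_top)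
  exact fun x _ => stmt_16_general (by simp) ⟨hφhom, hφsub⟩ (contDiffAt_of_ne_zero 3 hφsmooth)
    (fun α hα y _ => hψhom α hα y) hψpos (contDiffAt_of_ne_zero 2 hψsmooth) hP hF x
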